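/- arXiv:1603.02660 — 2 statements merged into one kernel-verified Lean document; each statement's English description precedes it below -/
import Mathlib

section
/- Let r ≥ 2 be an integer, let U ⊆ ℂ be open, and let A, B, C, E : ℂ → ℂ be holomorphic on U and satisfy the level-r Ramanujan system on U. Let a, b, c, d ∈ ℂ with ad − bc = 1, and let V ⊆ ℂ be open such that for every s ∈ V one has cs + d ≠ 0 and γ(s) := (as + b)/(cs + d) ∈ U. Define on V the functions Ã(s) = (cs+d)⁻¹·A(γ(s)), B̃(s) = (cs+d)⁻¹·B(γ(s)), C̃(s) = (cs+d)⁻¹·C(γ(s)), and Ẽ(s) = (cs+d)⁻²·E(γ(s)) + (r·i/π)·c·(cs+d)⁻¹. Then (Ã, B̃, C̃, Ẽ) satisfy the level-r Ramanujan system on V. -/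
open Complex

/-- The level-`r` Ramanujan system for functions `A B C E` holomorphic on a set `U ⊆ ℂ`:
`A^{r−2}·A′ = (πi/r)·(A^{r−1}·E + A·(2C^r − A^r))`, `B′ = (πi/r)·B·(E − A²)`,
`C′ = (πi/r)·C·(E + A²)`, and `E′ = (πi/r)·(E² − A⁴)`. -/
def RamanujanSystem (r : ℕ) (U : Set ℂ) (A B C E : ℂ → ℂ) : Prop :=
  DifferentiableOn ℂ A U ∧ DifferentiableOn ℂ B U ∧ DifferentiableOn ℂ C U ∧
    DifferentiableOn ℂ E U ∧
    ∀ z ∈ U,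
      A z ^ (r - 2) * deriv A z =
          (Real.pi : ℂ) * Complex.I / (r : ℂ) *
            (A z ^ (r - 1) * E z + A z * (2 * C z ^ r - A z ^ r)) ∧
      deriv B z = (Real.pi : ℂ) * Complex.I / (r : ℂ) * (B z * (E z - A z ^ 2)) ∧
      deriv C z = (Real.pi : ℂ) * Complex.I / (r : ℂ) * (C z * (E z + A z ^ 2)) ∧
      deriv E z = (Real.pi : ℂ) * Complex.I / (r : ℂ) * (E z ^ 2 - A z ^ 4)

/-!
Write `κ = πi/r` and let `E` transform with weight two up to the shift `μc/(cs + d)`, where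
`κμ = -1`. Then the Serre derivative `F' - kκEF` of a function `F` of weight `k` is covariant of
weight `k + 2`: differentiating the automorphy factor contributes `-kc(cs + d)⁻¹` times the
transform of `F`, which cancels against the shift of `E`. In the same way `E' - κE²` is covariant
of weight four. In terms of these expressions the Ramanujan system equates homogeneous quantities
of equal weight.
-/

section WeightTransform

variable {𝕜 : Type*} [NontriviallyNormedField 𝕜]

/-- The weight-`k` transform of `F` under the Möbius transformation with coefficients
`a, b, c, d`. The analogue of the slash operator of modular forms, without the determinant
factor and on functions defined on the whole field. -/
def weightTransform (a b c d : 𝕜) (k : ℕ) (F : 𝕜 → 𝕜) (s : 𝕜) : 𝕜 :=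
  (c * s + d)⁻¹ ^ k * F ((a * s + b) / (c * s + d))

/-- The weight-two quasi-modular transform of `E` with anomaly `μ`: the weight-two transform
shifted by `μ c / (c s + d)`. -/
def quasimodularTransform (a b c d μ : 𝕜) (E : 𝕜 → 𝕜) (s : 𝕜) : 𝕜 :=
  weightTransform a b c d 2 E s + μ * c * (c * s + d)⁻¹

/-- The Serre derivative in weight `k` with respect to the connection `κ E`, where `κ` is left
free in place of the classical `1 / 12` (with `E = E₂`). -/
noncomputable def serreDeriv (κ : 𝕜) (k : ℕ) (E F : 𝕜 → 𝕜) (s : 𝕜) : 𝕜 :=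
  deriv F s - k * κ * (E s * F s)

variable {a b c d κ μ s : 𝕜} {E F : 𝕜 → 𝕜} {U V : Set 𝕜}

theorem weightTransform_one (a b c d : 𝕜) (F : 𝕜 → 𝕜) :
    weightTransform a b c d 1 F = fun s => (c * s + d)⁻¹ * F ((a * s + b) / (c * s + d)) := by
  simp only [funext_iff, weightTransform, pow_one, implies_true]

theorem hasDerivAt_mul_add_const (a b s : 𝕜) : HasDerivAt (fun t => a * t + b) a s :=
  (hasDerivAt_const_mul a).add_const b

theorem hasDerivAt_moebius (hdet : a * d - b * c = 1) (hs : c * s + d ≠ 0) :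
    HasDerivAt (fun t => (a * t + b) / (c * t + d)) ((c * s + d)⁻¹ ^ 2) s := by
  refine ((hasDerivAt_mul_add_const a b s).fun_div (hasDerivAt_mul_add_const c d s) hs).congr_deriv
    ?_
  field_simp
  linear_combination hdet

theorem hasDerivAt_inv_mul_add_const (hs : c * s + d ≠ 0) :
    HasDerivAt (fun t => (c * t + d)⁻¹) (-c * (c * s + d)⁻¹ ^ 2) s :=
  ((hasDerivAt_mul_add_const c d s).fun_inv hs).congr_deriv (by field_simp)

theorem hasDerivAt_inv_mul_add_const_pow (k : ℕ) (hs : c * s + d ≠ 0) :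
    HasDerivAt (fun t => (c * t + d)⁻¹ ^ k) (-(k * c * (c * s + d)⁻¹ ^ (k + 1))) s := by
  refine ((hasDerivAt_inv_mul_add_const hs).fun_pow k).congr_deriv ?_
  cases k with
  | zero => simp
  | succ n => rw [Nat.add_sub_cancel]; ring

theorem hasDerivAt_weightTransform (k : ℕ) (hdet : a * d - b * c = 1) (hs : c * s + d ≠ 0)
    (hF : DifferentiableAt 𝕜 F ((a * s + b) / (c * s + d))) :
    HasDerivAt (weightTransform a b c d k F)
      (weightTransform a b c d (k + 2) (deriv F) s -
        k * c * weightTransform a b c d (k + 1) F s) s := by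
  have hcomp := hF.hasDerivAt.comp s (hasDerivAt_moebius hdet hs)
  refine ((hasDerivAt_inv_mul_add_const_pow k hs).fun_mul hcomp).congr_deriv ?_
  simp only [weightTransform, Function.comp_apply]
  ring

theorem hasDerivAt_quasimodularTransform (μ : 𝕜) (hdet : a * d - b * c = 1) (hs : c * s + d ≠ 0)
    (hE : DifferentiableAt 𝕜 E ((a * s + b) / (c * s + d))) :
    HasDerivAt (quasimodularTransform a b c d μ E)
      (weightTransform a b c d 4 (deriv E) s - 2 * c * weightTransform a b c d 3 E s -
        μ * c ^ 2 * (c * s + d)⁻¹ ^ 2) s := by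
  refine ((hasDerivAt_weightTransform 2 hdet hs hE).fun_add
    ((hasDerivAt_inv_mul_add_const hs).const_mul (μ * c))).congr_deriv ?_
  push_cast
  ring

theorem differentiableOn_weightTransform (k : ℕ) (hdet : a * d - b * c = 1) (hU : IsOpen U)
    (hmap : ∀ s ∈ V, c * s + d ≠ 0 ∧ (a * s + b) / (c * s + d) ∈ U)
    (hF : DifferentiableOn 𝕜 F U) : DifferentiableOn 𝕜 (weightTransform a b c d k F) V := by
  intro s hs
  obtain ⟨hj, hγ⟩ := hmap s hs
  have hderiv := hasDerivAt_weightTransform k hdet hj (hF.differentiableAt (hU.mem_nhds hγ))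
  exact hderiv.differentiableAt.differentiableWithinAt

theorem differentiableOn_quasimodularTransform (μ : 𝕜) (hdet : a * d - b * c = 1) (hU : IsOpen U)
    (hmap : ∀ s ∈ V, c * s + d ≠ 0 ∧ (a * s + b) / (c * s + d) ∈ U)
    (hE : DifferentiableOn 𝕜 E U) :
    DifferentiableOn 𝕜 (quasimodularTransform a b c d μ E) V := by
  intro s hs
  obtain ⟨hj, hγ⟩ := hmap s hs
  have hderiv := hasDerivAt_quasimodularTransform μ hdet hj (hE.differentiableAt (hU.mem_nhds hγ))
  exact hderiv.differentiableAt.differentiableWithinAt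

theorem serreDeriv_weightTransform (k : ℕ) (hκμ : κ * μ = -1) (hdet : a * d - b * c = 1)
    (hs : c * s + d ≠ 0) (hF : DifferentiableAt 𝕜 F ((a * s + b) / (c * s + d))) :
    serreDeriv κ k (quasimodularTransform a b c d μ E) (weightTransform a b c d k F) s =
      weightTransform a b c d (k + 2) (serreDeriv κ k E F) s := by
  rw [serreDeriv, (hasDerivAt_weightTransform k hdet hs hF).deriv]
  simp only [quasimodularTransform, weightTransform, serreDeriv]
  linear_combination
    -(k * c * (c * s + d)⁻¹ ^ (k + 1) * F ((a * s + b) / (c * s + d))) * hκμ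

/-- Although `E` has weight two, it is its Serre derivative in weight one, `E' - κE²`, that is
covariant: the shift enters the quadratic term twice. -/
theorem serreDeriv_quasimodularTransform (hκμ : κ * μ = -1) (hdet : a * d - b * c = 1)
    (hs : c * s + d ≠ 0) (hE : DifferentiableAt 𝕜 E ((a * s + b) / (c * s + d))) :
    serreDeriv κ 1 (quasimodularTransform a b c d μ E) (quasimodularTransform a b c d μ E) s =
      weightTransform a b c d 4 (serreDeriv κ 1 E E) s := by
  rw [serreDeriv, (hasDerivAt_quasimodularTransform μ hdet hs hE).deriv]
  simp only [quasimodularTransform, weightTransform, serreDeriv]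
  push_cast
  linear_combination
    -(2 * c * (c * s + d)⁻¹ ^ 3 * E ((a * s + b) / (c * s + d)) +
      μ * c ^ 2 * (c * s + d)⁻¹ ^ 2) * hκμ

end WeightTransform

theorem ramanujanSystem_iff_serreDeriv {r : ℕ} (hr : 2 ≤ r) {U : Set ℂ} {A B C E : ℂ → ℂ} :
    RamanujanSystem r U A B C E ↔
      DifferentiableOn ℂ A U ∧ DifferentiableOn ℂ B U ∧ DifferentiableOn ℂ C U ∧
        DifferentiableOn ℂ E U ∧
        ∀ z ∈ U,
          A z ^ (r - 2) * serreDeriv (Real.pi * I / r) 1 E A z =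
              Real.pi * I / r * (A z * (2 * C z ^ r - A z ^ r)) ∧
          serreDeriv (Real.pi * I / r) 1 E B z = -(Real.pi * I / r * (B z * A z ^ 2)) ∧
          serreDeriv (Real.pi * I / r) 1 E C z = Real.pi * I / r * (C z * A z ^ 2) ∧
          serreDeriv (Real.pi * I / r) 1 E E z = -(Real.pi * I / r * A z ^ 4) := by
  obtain ⟨n, rfl⟩ := Nat.exists_eq_add_of_le' hr
  simp only [RamanujanSystem, serreDeriv, Nat.add_sub_cancel, Nat.cast_one, one_mul,
    show n + 2 - 1 = n + 1 from rfl]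
  refine and_congr_right fun _ => and_congr_right fun _ => and_congr_right fun _ =>
    and_congr_right fun _ => forall₂_congr fun z _ => ?_
  refine and_congr ?_ (and_congr ?_ (and_congr ?_ ?_)) <;>
    constructor <;> intro h <;> linear_combination h

theorem pi_mul_I_div_mul_mul_I_div_pi {r : ℂ} (hr : r ≠ 0) :
    Real.pi * I / r * (r * I / Real.pi) = -1 := by
  have hpi : (Real.pi : ℂ) ≠ 0 := ofReal_ne_zero.mpr Real.pi_ne_zero
  field_simp
  exact I_sq

/-- Invariance of the level-`r` Ramanujan system under a determinant-one fractional linear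
change of variable, with the quasi-modular shift term in the transformed `E`. -/
theorem ramanujanSystem_moebius_invariance
    (r : ℕ) (hr : 2 ≤ r) (U : Set ℂ) (hU : IsOpen U)
    (A B C E : ℂ → ℂ) (hsys : RamanujanSystem r U A B C E)
    (a b c d : ℂ) (hdet : a * d - b * c = 1)
    (V : Set ℂ) (hV : IsOpen V)
    (hmap : ∀ s ∈ V, c * s + d ≠ 0 ∧ (a * s + b) / (c * s + d) ∈ U) :
    RamanujanSystem r V
      (fun s => (c * s + d)⁻¹ * A ((a * s + b) / (c * s + d)))
      (fun s => (c * s + d)⁻¹ * B ((a * s + b) / (c * s + d)))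
      (fun s => (c * s + d)⁻¹ * C ((a * s + b) / (c * s + d)))
      (fun s => ((c * s + d)⁻¹) ^ 2 * E ((a * s + b) / (c * s + d)) +
        ((r : ℂ) * Complex.I / (Real.pi : ℂ)) * c * (c * s + d)⁻¹) := by
  suffices RamanujanSystem r V (weightTransform a b c d 1 A) (weightTransform a b c d 1 B)
      (weightTransform a b c d 1 C) (quasimodularTransform a b c d (r * I / Real.pi) E) by
    simp only [weightTransform_one] at this
    exact this
  have hκμ := pi_mul_I_div_mul_mul_I_div_pi (Nat.cast_ne_zero.mpr (by omega : r ≠ 0))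
  obtain ⟨hA, hB, hC, hE, hsys⟩ := (ramanujanSystem_iff_serreDeriv hr).mp hsys
  refine (ramanujanSystem_iff_serreDeriv hr).mpr
    ⟨differentiableOn_weightTransform 1 hdet hU hmap hA,
      differentiableOn_weightTransform 1 hdet hU hmap hB,
      differentiableOn_weightTransform 1 hdet hU hmap hC,
      differentiableOn_quasimodularTransform _ hdet hU hmap hE, fun s hs => ?_⟩
  obtain ⟨hj, hγ⟩ := hmap s hs
  have hUγ := hU.mem_nhds hγ
  obtain ⟨eqA, eqB, eqC, eqE⟩ := hsys _ hγ
  rw [serreDeriv_weightTransform 1 hκμ hdet hj (hA.differentiableAt hUγ),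
    serreDeriv_weightTransform 1 hκμ hdet hj (hB.differentiableAt hUγ),
    serreDeriv_weightTransform 1 hκμ hdet hj (hC.differentiableAt hUγ),
    serreDeriv_quasimodularTransform hκμ hdet hj (hE.differentiableAt hUγ)]
  obtain ⟨n, rfl⟩ := Nat.exists_eq_add_of_le' hr
  simp only [weightTransform, eqB, eqC, eqE, Nat.add_sub_cancel] at eqA ⊢
  exact ⟨by linear_combination (c * s + d)⁻¹ ^ (n + 3) * eqA, by ring, by ring, by ring⟩
end

section
/- Let D ⊆ ℂ be a connected open set containing 0. Suppose f₁, f₂, f₃ : D → ℂ are holomorphic and satisfy the pillowcase WDVV system with f₁(0) = −1/4, f₂(0) = 0, f₃(0) = 0, and suppose g₁, g₂, g₃ : D → ℂ are holomorphic and satisfy g₁′ + 2g₂g₁ = 4g₁g₃, g₂′ + 2g₃g₂ + g₃′ = 2g₁² + 2g₃², g₃′ + g₃² = g₁², with g₁(0) = 1/4, g₂(0) = 0, g₃(0) = 0. Then g₁ = −f₁, g₂ = f₂ + 2f₃, and g₃ = f₃ on D. -/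
open Complex

/-- The pillowcase WDVV system:
`f₁′ + 2f₁f₂ = 0`, `f₂′ + 2f₂f₃ + f₃′ = 0`, `f₃′ + f₃² = f₁²` on a set `U ⊆ ℂ`. -/
def PillowcaseWDVV (U : Set ℂ) (f₁ f₂ f₃ : ℂ → ℂ) : Prop :=
  ∀ z ∈ U,
    deriv f₁ z + 2 * f₁ z * f₂ z = 0 ∧
    deriv f₂ z + 2 * f₂ z * f₃ z + deriv f₃ z = 0 ∧
    deriv f₃ z + f₃ z ^ 2 = f₁ z ^ 2

/-! If `(f₁, f₂, f₃)` solves the broad system, then `(-f₁, f₂ + 2f₃, f₃)` solves the narrow one.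
Solving the narrow system for the derivatives turns it into an autonomous polynomial ODE, so two
solutions with the same value at a point agree near that point along the real direction by
Picard–Lindelöf uniqueness, hence on the whole connected domain by the identity theorem. -/

open Filter Set Topology

section HolomorphicODE

variable {E : Type*} [NormedAddCommGroup E] [NormedSpace ℂ E]

lemma tendsto_add_ofReal_nhdsNE (z₀ : ℂ) :
    Tendsto (fun t : ℝ ↦ z₀ + t) (𝓝[≠] 0) (𝓝[≠] z₀) := by
  have hcont : Continuous fun t : ℝ ↦ z₀ + t := by fun_prop
  have hmaps : MapsTo (fun t : ℝ ↦ z₀ + t) {0}ᶜ {z₀}ᶜ := fun t ht ↦ by simpa using ht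
  simpa using hcont.continuousWithinAt.tendsto_nhdsWithin (x := 0) hmaps

lemma hasDerivAt_comp_add_ofReal {u : ℂ → E} {u' : E} {z₀ : ℂ} {t : ℝ}
    (hu : HasDerivAt u u' (z₀ + t)) : HasDerivAt (fun s : ℝ ↦ u (z₀ + s)) u' t := by
  simpa [Function.comp_def] using (hu.comp_const_add z₀ t).scomp t ofRealCLM.hasDerivAt

theorem frequently_eq_of_hasDerivAt_of_lipschitzOnWith {v : ℂ → E → E} {K : NNReal} {s : Set E}
    {u w : ℂ → E} {z₀ : ℂ} (hv : ∀ᶠ z in 𝓝 z₀, LipschitzOnWith K (v z) s) (hs : s ∈ 𝓝 (u z₀))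
    (hu : ∀ᶠ z in 𝓝 z₀, HasDerivAt u (v z (u z)) z)
    (hw : ∀ᶠ z in 𝓝 z₀, HasDerivAt w (v z (w z)) z) (huw : u z₀ = w z₀) :
    ∃ᶠ z in 𝓝[≠] z₀, u z = w z := by
  have hline : Tendsto (fun t : ℝ ↦ z₀ + t) (𝓝 0) (𝓝 z₀) :=
    Continuous.tendsto' (by fun_prop) 0 z₀ (by simp)
  have restrict {y : ℂ → E} (hy : ∀ᶠ z in 𝓝 z₀, HasDerivAt y (v z (y z)) z)
      (hys : s ∈ 𝓝 (y z₀)) : ∀ᶠ t : ℝ in 𝓝 0,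
        HasDerivAt (fun t : ℝ ↦ y (z₀ + t)) (v (z₀ + t) (y (z₀ + t))) t ∧ y (z₀ + t) ∈ s := by
    filter_upwards [hline.eventually hy, hline.eventually (hy.self_of_nhds.continuousAt hys)]
      with t hderiv hmem
    exact ⟨hasDerivAt_comp_add_ofReal hderiv, hmem⟩
  have hreal : (fun t : ℝ ↦ u (z₀ + t)) =ᶠ[𝓝 0] fun t : ℝ ↦ w (z₀ + t) :=
    ODE_solution_unique_of_eventually (v := fun t : ℝ ↦ v (z₀ + t)) (s := fun _ ↦ s)
      (hline.eventually hv) (restrict hu hs) (restrict hw (huw ▸ hs)) (by simpa using huw)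
  exact (tendsto_add_ofReal_nhdsNE z₀).frequently
    (hreal.filter_mono nhdsWithin_le_nhds).frequently

theorem eqOn_of_hasDerivAt_of_lipschitzOnWith [CompleteSpace E] {v : ℂ → E → E} {K : NNReal}
    {s : Set E} {D : Set ℂ} {u w : ℂ → E} {z₀ : ℂ} (hD : IsOpen D) (hconn : IsPreconnected D)
    (hz₀ : z₀ ∈ D) (hv : ∀ᶠ z in 𝓝 z₀, LipschitzOnWith K (v z) s) (hs : s ∈ 𝓝 (u z₀))
    (hu : ∀ z ∈ D, HasDerivAt u (v z (u z)) z) (hw : ∀ z ∈ D, HasDerivAt w (v z (w z)) z)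
    (huw : u z₀ = w z₀) : EqOn u w D := by
  have analytic {y : ℂ → E} (hy : ∀ z ∈ D, HasDerivAt y (v z (y z)) z) : AnalyticOnNhd ℂ y D :=
    DifferentiableOn.analyticOnNhd
      (fun z hz ↦ (hy z hz).differentiableAt.differentiableWithinAt) hD
  have near {p : ℂ → Prop} (hp : ∀ z ∈ D, p z) : ∀ᶠ z in 𝓝 z₀, p z :=
    eventually_of_mem (hD.mem_nhds hz₀) hp
  exact (analytic hu).eqOn_of_preconnected_of_frequently_eq (analytic hw) hconn hz₀ <|
    frequently_eq_of_hasDerivAt_of_lipschitzOnWith hv hs (near hu) (near hw) huw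

end HolomorphicODE

/-- The WDVV system of the narrow pillowcase correlation functions
`g₁ = ⟨⟨φ₁,φ₁,φ₂,φ₂⟩⟩`, `g₂ = ⟨⟨φ₂,φ₂,φ₂,φ₂⟩⟩`, `g₃ = ⟨⟨φ₁,φ₃,φ₂,φ₂⟩⟩` on a set `U ⊆ ℂ`, written
with `deriv` as in `PillowcaseWDVV`; differentiability is not part of the definition. -/
def NarrowPillowcaseWDVV (U : Set ℂ) (g₁ g₂ g₃ : ℂ → ℂ) : Prop :=
  ∀ z ∈ U,
    deriv g₁ z + 2 * g₂ z * g₁ z = 4 * g₁ z * g₃ z ∧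
    deriv g₂ z + 2 * g₃ z * g₂ z + deriv g₃ z = 2 * g₁ z ^ 2 + 2 * g₃ z ^ 2 ∧
    deriv g₃ z + g₃ z ^ 2 = g₁ z ^ 2

/-- The vector field on `ℂ³` whose integral curves are the solutions of `NarrowPillowcaseWDVV`,
obtained by solving that system for the three derivatives. -/
def narrowPillowcaseField (x : ℂ × ℂ × ℂ) : ℂ × ℂ × ℂ :=
  (4 * x.1 * x.2.2 - 2 * x.2.1 * x.1,
    x.1 ^ 2 + 3 * x.2.2 ^ 2 - 2 * x.2.2 * x.2.1,
    x.1 ^ 2 - x.2.2 ^ 2)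

lemma contDiff_narrowPillowcaseField {n : WithTop ℕ∞} : ContDiff ℂ n narrowPillowcaseField := by
  unfold narrowPillowcaseField
  fun_prop

section Pillowcase

variable {D : Set ℂ} {f₁ f₂ f₃ g₁ g₂ g₃ : ℂ → ℂ} {z₀ : ℂ}

theorem PillowcaseWDVV.narrowPillowcaseWDVV (hf : PillowcaseWDVV D f₁ f₂ f₃) (hD : IsOpen D)
    (hf₂ : DifferentiableOn ℂ f₂ D) (hf₃ : DifferentiableOn ℂ f₃ D) :
    NarrowPillowcaseWDVV D (fun z ↦ -f₁ z) (fun z ↦ f₂ z + 2 * f₃ z) f₃ := by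
  intro z hz
  obtain ⟨e₁, e₂, e₃⟩ := hf z hz
  have d₂ : deriv (fun z ↦ f₂ z + 2 * f₃ z) z = deriv f₂ z + 2 * deriv f₃ z :=
    ((hf₂.hasDerivAt (hD.mem_nhds hz)).fun_add
      ((hf₃.hasDerivAt (hD.mem_nhds hz)).const_mul 2)).deriv
  rw [d₂, deriv.fun_neg]
  exact ⟨by linear_combination -e₁, by linear_combination e₂ + 2 * e₃, by linear_combination e₃⟩

theorem NarrowPillowcaseWDVV.hasDerivAt (hg : NarrowPillowcaseWDVV D g₁ g₂ g₃) (hD : IsOpen D)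
    (hg₁ : DifferentiableOn ℂ g₁ D) (hg₂ : DifferentiableOn ℂ g₂ D)
    (hg₃ : DifferentiableOn ℂ g₃ D) {z : ℂ} (hz : z ∈ D) :
    HasDerivAt (fun z ↦ (g₁ z, g₂ z, g₃ z)) (narrowPillowcaseField (g₁ z, g₂ z, g₃ z)) z := by
  obtain ⟨e₁, e₂, e₃⟩ := hg z hz
  have hfield : narrowPillowcaseField (g₁ z, g₂ z, g₃ z) =
      (deriv g₁ z, deriv g₂ z, deriv g₃ z) := by
    refine Prod.ext ?_ (Prod.ext ?_ ?_) <;> dsimp only [narrowPillowcaseField]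
    · linear_combination -e₁
    · linear_combination e₃ - e₂
    · linear_combination -e₃
  have hDz : D ∈ 𝓝 z := hD.mem_nhds hz
  rw [hfield]
  exact (hg₁.hasDerivAt hDz).prodMk ((hg₂.hasDerivAt hDz).prodMk (hg₃.hasDerivAt hDz))

theorem NarrowPillowcaseWDVV.eqOn {h₁ h₂ h₃ : ℂ → ℂ} (hg : NarrowPillowcaseWDVV D g₁ g₂ g₃)
    (hh : NarrowPillowcaseWDVV D h₁ h₂ h₃) (hD : IsOpen D) (hconn : IsPreconnected D)
    (hz₀ : z₀ ∈ D)
    (hg₁ : DifferentiableOn ℂ g₁ D) (hg₂ : DifferentiableOn ℂ g₂ D)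
    (hg₃ : DifferentiableOn ℂ g₃ D) (hh₁ : DifferentiableOn ℂ h₁ D)
    (hh₂ : DifferentiableOn ℂ h₂ D) (hh₃ : DifferentiableOn ℂ h₃ D)
    (hgh₁ : g₁ z₀ = h₁ z₀) (hgh₂ : g₂ z₀ = h₂ z₀) (hgh₃ : g₃ z₀ = h₃ z₀) :
    EqOn (fun z ↦ (g₁ z, g₂ z, g₃ z)) (fun z ↦ (h₁ z, h₂ z, h₃ z)) D := by
  obtain ⟨K, s, hs, hLip⟩ :=
    (contDiff_narrowPillowcaseField.contDiffAt (x := (g₁ z₀, g₂ z₀, g₃ z₀))).exists_lipschitzOnWith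
  exact eqOn_of_hasDerivAt_of_lipschitzOnWith (v := fun _ ↦ narrowPillowcaseField) hD hconn hz₀
    (.of_forall fun _ ↦ hLip) hs (fun _ hz ↦ hg.hasDerivAt hD hg₁ hg₂ hg₃ hz)
    (fun _ hz ↦ hh.hasDerivAt hD hh₁ hh₂ hh₃ hz) (by simp only [hgh₁, hgh₂, hgh₃])

theorem pillowcase_narrow_from_broad_general (hD : IsOpen D) (hconn : IsPreconnected D)
    (hz₀ : z₀ ∈ D)
    (hf₁ : DifferentiableOn ℂ f₁ D) (hf₂ : DifferentiableOn ℂ f₂ D)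
    (hf₃ : DifferentiableOn ℂ f₃ D)
    (hg₁ : DifferentiableOn ℂ g₁ D) (hg₂ : DifferentiableOn ℂ g₂ D)
    (hg₃ : DifferentiableOn ℂ g₃ D)
    (hf : PillowcaseWDVV D f₁ f₂ f₃) (hg : NarrowPillowcaseWDVV D g₁ g₂ g₃)
    (hgf₁ : g₁ z₀ = -f₁ z₀) (hgf₂ : g₂ z₀ = f₂ z₀ + 2 * f₃ z₀) (hgf₃ : g₃ z₀ = f₃ z₀) :
    ∀ z ∈ D, g₁ z = -f₁ z ∧ g₂ z = f₂ z + 2 * f₃ z ∧ g₃ z = f₃ z := by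
  have heq := hg.eqOn (hf.narrowPillowcaseWDVV hD hf₂ hf₃) hD hconn hz₀ hg₁ hg₂ hg₃
    hf₁.neg (hf₂.fun_add (hf₃.const_mul 2)) hf₃ hgf₁ hgf₂ hgf₃
  simpa [EqOn] using heq

end Pillowcase

/-- In the FJRW theory of the pillowcase, the narrow genus-zero correlation functions
`g₁, g₂, g₃` are determined by the broad ones `f₁, f₂, f₃` via
`g₁ = −f₁`, `g₂ = f₂ + 2f₃`, `g₃ = f₃`. -/
theorem pillowcase_narrow_from_broad
    (D : Set ℂ) (hD : IsOpen D) (hconn : IsConnected D) (h0 : (0 : ℂ) ∈ D)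
    (f₁ f₂ f₃ g₁ g₂ g₃ : ℂ → ℂ)
    (hf₁ : DifferentiableOn ℂ f₁ D) (hf₂ : DifferentiableOn ℂ f₂ D)
    (hf₃ : DifferentiableOn ℂ f₃ D)
    (hg₁ : DifferentiableOn ℂ g₁ D) (hg₂ : DifferentiableOn ℂ g₂ D)
    (hg₃ : DifferentiableOn ℂ g₃ D)
    (hf : PillowcaseWDVV D f₁ f₂ f₃)
    (hf₁0 : f₁ 0 = -(1 / 4)) (hf₂0 : f₂ 0 = 0) (hf₃0 : f₃ 0 = 0)
    (hgeq1 : ∀ z ∈ D, deriv g₁ z + 2 * g₂ z * g₁ z = 4 * g₁ z * g₃ z)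
    (hgeq2 : ∀ z ∈ D,
      deriv g₂ z + 2 * g₃ z * g₂ z + deriv g₃ z = 2 * g₁ z ^ 2 + 2 * g₃ z ^ 2)
    (hgeq3 : ∀ z ∈ D, deriv g₃ z + g₃ z ^ 2 = g₁ z ^ 2)
    (hg₁0 : g₁ 0 = 1 / 4) (hg₂0 : g₂ 0 = 0) (hg₃0 : g₃ 0 = 0) :
    ∀ z ∈ D, g₁ z = -f₁ z ∧ g₂ z = f₂ z + 2 * f₃ z ∧ g₃ z = f₃ z :=
  pillowcase_narrow_from_broad_general hD hconn.isPreconnected h0 hf₁ hf₂ hf₃ hg₁ hg₂ hg₃ hf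
    (fun z hz ↦ ⟨hgeq1 z hz, hgeq2 z hz, hgeq3 z hz⟩)
    (by simp [hf₁0, hg₁0]) (by simp [hf₂0, hf₃0, hg₂0]) (by simp [hf₃0, hg₃0])
end
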